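/- Weak comparison with a classical solution (subsolution version): Let Ω be a bounded domain in ℝ^N with N ≥ 2 and let H : Ω → ℝ be locally Lipschitz continuous. Let u ∈ C²(Ω) ∩ C(cl(Ω)) satisfy M(u) = NH pointwise in Ω, and let v : cl(Ω) → ℝ be upper semicontinuous on cl(Ω) and a viscosity subsolution of M(v) = NH in Ω. If u ≥ v on ∂Ω, then u ≥ v in Ω. -/

import Mathlib

open Metric Set Filter Topology MeasureTheory

/-- The mean curvature operator `M(w) = div (Dw / sqrt (1 + |Dw|²))`,
computed as the sum of the partial derivatives of the components of the
normalized gradient field. -/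
noncomputable def mcOp {N : ℕ} (w : EuclideanSpace ℝ (Fin N) → ℝ)
    (x : EuclideanSpace ℝ (Fin N)) : ℝ :=
  ∑ i : Fin N,
    fderiv ℝ (fun y => (Real.sqrt (1 + ‖gradient w y‖ ^ 2))⁻¹ * gradient w y i) x
      (EuclideanSpace.single i 1)

/-- `f` is locally Lipschitz continuous on the set `s`. -/
def LocLipschitzOn {N : ℕ} (s : Set (EuclideanSpace ℝ (Fin N)))
    (f : EuclideanSpace ℝ (Fin N) → ℝ) : Prop :=
  ∀ x ∈ s, ∃ K : NNReal, ∃ t ∈ 𝓝[s] x, LipschitzOnWith K f t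

/-- `u` is a viscosity supersolution of `M(u) = N H` on the open set `U`. -/
def IsViscositySupersol {N : ℕ} (U : Set (EuclideanSpace ℝ (Fin N)))
    (H u : EuclideanSpace ℝ (Fin N) → ℝ) : Prop :=
  ∀ φ : EuclideanSpace ℝ (Fin N) → ℝ, ContDiffOn ℝ 2 φ U →
    ∀ x ∈ U, IsLocalMinOn (fun y => u y - φ y) U x → mcOp φ x ≤ N * H x

/-- `v` is a viscosity subsolution of `M(v) = N H` on the open set `U`. -/
def IsViscositySubsol {N : ℕ} (U : Set (EuclideanSpace ℝ (Fin N)))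
    (H v : EuclideanSpace ℝ (Fin N) → ℝ) : Prop :=
  ∀ φ : EuclideanSpace ℝ (Fin N) → ℝ, ContDiffOn ℝ 2 φ U →
    ∀ x ∈ U, IsLocalMaxOn (fun y => v y - φ y) U x → mcOp φ x ≥ N * H x

/-- The normalized vector field. -/
noncomputable def mcG {N : ℕ} (p : EuclideanSpace ℝ (Fin N)) : EuclideanSpace ℝ (Fin N) :=
  (Real.sqrt (1 + ‖p‖ ^ 2))⁻¹ • p

lemma mcG_contDiff {N : ℕ} : ContDiff ℝ 2 (mcG (N := N)) := by
  unfold mcG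
  refine ContDiff.smul (ContDiff.inv (ContDiff.sqrt ?_ ?_) ?_) contDiff_id
  · exact contDiff_const.add (contDiff_norm_sq ℝ)
  · intro x; positivity
  · intro x; positivity

lemma mcG_elliptic {N : ℕ} (j : Fin N) (p : EuclideanSpace ℝ (Fin N)) :
    0 < (fderiv ℝ mcG p (EuclideanSpace.single j 1)) j := by
  have h1 : HasFDerivAt (fun p : EuclideanSpace ℝ (Fin N) => 1 + ‖p‖ ^ 2)
      (2 • (innerSL ℝ p)) p := (hasStrictFDerivAt_norm_sq p).hasFDerivAt.const_add 1
  have h2 := h1.sqrt (by positivity)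
  have hs : 0 < Real.sqrt (1 + ‖p‖ ^ 2) := by positivity
  have h3 := (hasDerivAt_inv hs.ne').comp_hasFDerivAt p h2
  have h4 := h3.smul (hasFDerivAt_id p)
  have h5 : fderiv ℝ mcG p = _ := h4.fderiv
  rw [h5]
  have hsq : Real.sqrt (1 + ‖p‖ ^ 2) ^ 2 = 1 + ‖p‖ ^ 2 := Real.sq_sqrt (by positivity)
  have hp : (p j) ^ 2 ≤ ‖p‖ ^ 2 := by
    rw [EuclideanSpace.norm_sq_eq]
    have := Finset.single_le_sum (f := fun i => ‖p i‖ ^ 2) (fun i _ => by positivity)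
      (Finset.mem_univ j)
    simpa using this
  simp [EuclideanSpace.inner_single_right]
  set s := Real.sqrt (1 + ‖p‖ ^ 2)
  have : s⁻¹ - (s^3)⁻¹ * (p j)^2 > 0 := by
    have : s⁻¹ - (s^3)⁻¹ * (p j)^2 = (s^3)⁻¹ * (s^2 - (p j)^2) := by field_simp
    rw [this]
    apply mul_pos (by positivity); linarith
  have h6 : (s ^ 2)⁻¹ * (s⁻¹ * 2⁻¹ * (2 * p j)) * p j = (s^3)⁻¹ * (p j)^2 := by
    field_simp
  rw [h6]
  linarith

lemma mcOp_eq {N : ℕ} (w : EuclideanSpace ℝ (Fin N) → ℝ) (x : EuclideanSpace ℝ (Fin N))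
    (p : EuclideanSpace ℝ (Fin N))
    (X : EuclideanSpace ℝ (Fin N) →L[ℝ] EuclideanSpace ℝ (Fin N))
    (hp : gradient w x = p) (hX : HasFDerivAt (gradient w) X x) :
    mcOp w x = ∑ i, (fderiv ℝ mcG p (X (EuclideanSpace.single i 1))) i := by
  unfold mcOp
  refine Finset.sum_congr rfl fun i _ => ?_
  have hG : HasFDerivAt mcG (fderiv ℝ mcG p) (gradient w x) := by
    rw [hp]
    exact (mcG_contDiff.differentiable (by norm_num) p).hasFDerivAt
  have h := hG.comp x hX
  have h2 := ((EuclideanSpace.proj i : EuclideanSpace ℝ (Fin N) →L[ℝ] ℝ).hasFDerivAt).comp x h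
  have h3 : HasFDerivAt (fun y => (Real.sqrt (1 + ‖gradient w y‖ ^ 2))⁻¹ * gradient w y i) _ x := h2
  rw [h3.fderiv]
  rfl

lemma grad_contDiffOn {N : ℕ} {Ω : Set (EuclideanSpace ℝ (Fin N))} (hΩo : IsOpen Ω)
    {u : EuclideanSpace ℝ (Fin N) → ℝ} (hu : ContDiffOn ℝ 2 u Ω) :
    ContDiffOn ℝ 1 (gradient u) Ω := by
  have h := hu.fderiv_of_isOpen (m := 1) hΩo (by norm_num)
  exact (InnerProductSpace.toDual ℝ (EuclideanSpace ℝ (Fin N))).symm.toContinuousLinearEquiv.contDiff.comp_contDiffOn h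

lemma mcG_lip {N : ℕ} (R : ℝ) : ∃ L : ℝ, 0 ≤ L ∧ ∀ p ∈ closedBall (0 : EuclideanSpace ℝ (Fin N)) R,
    ∀ q ∈ closedBall (0 : EuclideanSpace ℝ (Fin N)) R,
    ‖fderiv ℝ mcG q - fderiv ℝ mcG p‖ ≤ L * ‖q - p‖ := by
  have h1 : ContDiff ℝ 1 (fderiv ℝ (mcG (N := N))) := mcG_contDiff.fderiv_right (by norm_num)
  obtain ⟨K, hK⟩ := h1.locallyLipschitz.locallyLipschitzOn.exists_lipschitzOnWith_of_compact
    (isCompact_closedBall (0 : EuclideanSpace ℝ (Fin N)) R)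
  refine ⟨K, K.2, fun p hp q hq => ?_⟩
  have := hK.dist_le_mul q hq p hp
  simpa [dist_eq_norm] using this

lemma mcG_ell {N : ℕ} (j : Fin N) (R : ℝ) : ∃ θ : ℝ, 0 < θ ∧
    ∀ p ∈ closedBall (0 : EuclideanSpace ℝ (Fin N)) R,
    θ ≤ (fderiv ℝ mcG p (EuclideanSpace.single j 1)) j := by
  have h1 : Continuous (fderiv ℝ (mcG (N := N))) := mcG_contDiff.continuous_fderiv (by norm_num)
  have hc : Continuous fun p : EuclideanSpace ℝ (Fin N) =>
      (fderiv ℝ mcG p (EuclideanSpace.single j 1)) j := by fun_prop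
  rcases (closedBall (0 : EuclideanSpace ℝ (Fin N)) R).eq_empty_or_nonempty with h | h
  · exact ⟨1, one_pos, by simp [h]⟩
  · obtain ⟨p, hp, hm⟩ := (isCompact_closedBall _ R).exists_isMinOn h hc.continuousOn
    exact ⟨_, mcG_elliptic j p, fun q hq => hm hq⟩

/-- The key strict inequality. -/
lemma mc_strict {N : ℕ} (j : Fin N) (R P' L θ s l : ℝ) (hL : 0 ≤ L)
    (p : EuclideanSpace ℝ (Fin N))
    (X : EuclideanSpace ℝ (Fin N) →L[ℝ] EuclideanSpace ℝ (Fin N)) (hs : 0 < s)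
    (hp : p ∈ closedBall (0 : EuclideanSpace ℝ (Fin N)) R)
    (hq : p - s • EuclideanSpace.single j 1 ∈ closedBall (0 : EuclideanSpace ℝ (Fin N)) R)
    (hX : ‖X‖ ≤ P') (hl0 : 0 ≤ l) (hl : N * (L * P') < l * θ)
    (hLip : ∀ p ∈ closedBall (0 : EuclideanSpace ℝ (Fin N)) R,
      ∀ q ∈ closedBall (0 : EuclideanSpace ℝ (Fin N)) R,
      ‖fderiv ℝ mcG q - fderiv ℝ mcG p‖ ≤ L * ‖q - p‖)
    (hθ : ∀ p ∈ closedBall (0 : EuclideanSpace ℝ (Fin N)) R,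
      θ ≤ (fderiv ℝ mcG p (EuclideanSpace.single j 1)) j) :
    ∑ i, (fderiv ℝ mcG (p - s • EuclideanSpace.single j 1)
      ((X - (s * l) • (EuclideanSpace.proj j : EuclideanSpace ℝ (Fin N) →L[ℝ] ℝ).smulRight
        (EuclideanSpace.single j (1 : ℝ))) (EuclideanSpace.single i 1))) i
    < ∑ i, (fderiv ℝ mcG p (X (EuclideanSpace.single i 1))) i := by
  set q := p - s • EuclideanSpace.single j (1 : ℝ) with hqdef
  have hqp : ‖q - p‖ = s := by
    simp [hqdef, norm_smul, abs_of_pos hs]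
  have h1 := hLip p hp q hq
  rw [hqp] at h1
  have hθq := hθ q hq
  have e1 : ∀ i : Fin N, (fderiv ℝ mcG q
      ((X - (s * l) • (EuclideanSpace.proj j : EuclideanSpace ℝ (Fin N) →L[ℝ] ℝ).smulRight
        (EuclideanSpace.single j (1 : ℝ))) (EuclideanSpace.single i 1))) i
      = (fderiv ℝ mcG p (X (EuclideanSpace.single i 1))) i
        + ((fderiv ℝ mcG q - fderiv ℝ mcG p) (X (EuclideanSpace.single i 1))) i
        - (if i = j then s * l * (fderiv ℝ mcG q (EuclideanSpace.single j 1)) j else 0) := by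
    intro i
    by_cases hij : i = j
    · subst hij; simp
    · simp [hij, Ne.symm hij, eq_comm]
  have e2 : ∀ i : Fin N,
      ((fderiv ℝ mcG q - fderiv ℝ mcG p) (X (EuclideanSpace.single i 1))) i ≤ L * s * P' := by
    intro i
    calc ((fderiv ℝ mcG q - fderiv ℝ mcG p) (X (EuclideanSpace.single i 1))) i
        ≤ ‖((fderiv ℝ mcG q - fderiv ℝ mcG p) (X (EuclideanSpace.single i 1))) i‖ := le_abs_self _
      _ ≤ ‖(fderiv ℝ mcG q - fderiv ℝ mcG p) (X (EuclideanSpace.single i 1))‖ :=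
          PiLp.norm_apply_le _ i
      _ ≤ ‖fderiv ℝ mcG q - fderiv ℝ mcG p‖ * ‖X (EuclideanSpace.single i 1)‖ :=
          ContinuousLinearMap.le_opNorm _ _
      _ ≤ (L * s) * P' := by
          refine mul_le_mul h1 ?_ (norm_nonneg _) (by positivity)
          refine (X.le_opNorm _).trans ?_
          simpa using hX
  have e3 := Finset.sum_le_sum (s := Finset.univ) fun i _ => e2 i
  simp only [Finset.sum_const, Finset.card_univ, Fintype.card_fin, nsmul_eq_mul] at e3
  simp only [e1, Finset.sum_sub_distrib, Finset.sum_add_distrib, Finset.sum_ite_eq',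
    Finset.mem_univ, if_true]
  have : s * l * θ ≤ s * l * (fderiv ℝ mcG q (EuclideanSpace.single j 1)) j :=
    mul_le_mul_of_nonneg_left hθq (by positivity)
  nlinarith [mul_lt_mul_of_pos_left hl hs]

lemma grad_perturb {N : ℕ} (j : Fin N) {Ω : Set (EuclideanSpace ℝ (Fin N))} (hΩo : IsOpen Ω)
    {u : EuclideanSpace ℝ (Fin N) → ℝ} (hu : ContDiffOn ℝ 2 u Ω) (ε l : ℝ)
    (x : EuclideanSpace ℝ (Fin N)) (hx : x ∈ Ω) :
    gradient (fun y => u y - ε * Real.exp (l * y j)) x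
      = gradient u x - (ε * l * Real.exp (l * x j)) • EuclideanSpace.single j 1 := by
  have hd : DifferentiableAt ℝ u x :=
    (hu.differentiableOn (by norm_num) x hx).differentiableAt (hΩo.mem_nhds hx)
  apply HasGradientAt.gradient
  rw [hasGradientAt_iff_hasFDerivAt]
  have hj : HasFDerivAt (fun y : EuclideanSpace ℝ (Fin N) => y j)
    (EuclideanSpace.proj j : EuclideanSpace ℝ (Fin N) →L[ℝ] ℝ) x :=
    (EuclideanSpace.proj j : EuclideanSpace ℝ (Fin N) →L[ℝ] ℝ).hasFDerivAt
  have h := hd.hasFDerivAt.sub (((hj.const_mul l).exp).const_mul ε)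
  refine h.congr_fderiv ?_
  ext z
  simp [inner_sub_left, inner_gradient_left, inner_smul_left, EuclideanSpace.inner_single_left]
  ring

lemma grad_perturb_deriv {N : ℕ} (j : Fin N) {Ω : Set (EuclideanSpace ℝ (Fin N))}
    (hΩo : IsOpen Ω)
    {u : EuclideanSpace ℝ (Fin N) → ℝ} (hu : ContDiffOn ℝ 2 u Ω) (ε l : ℝ)
    (x : EuclideanSpace ℝ (Fin N)) (hx : x ∈ Ω) :
    HasFDerivAt (gradient (fun y => u y - ε * Real.exp (l * y j)))
      (fderiv ℝ (gradient u) x - (ε * l * Real.exp (l * x j) * l) •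
        (EuclideanSpace.proj j : EuclideanSpace ℝ (Fin N) →L[ℝ] ℝ).smulRight
        (EuclideanSpace.single j (1 : ℝ))) x := by
  have hd : DifferentiableAt ℝ (gradient u) x :=
    ((grad_contDiffOn hΩo hu).differentiableOn (by norm_num) x hx).differentiableAt
      (hΩo.mem_nhds hx)
  have hj : HasFDerivAt (fun y : EuclideanSpace ℝ (Fin N) => y j)
    (EuclideanSpace.proj j : EuclideanSpace ℝ (Fin N) →L[ℝ] ℝ) x :=
    (EuclideanSpace.proj j : EuclideanSpace ℝ (Fin N) →L[ℝ] ℝ).hasFDerivAt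
  have h := hd.hasFDerivAt.sub ((((hj.const_mul l).exp).const_mul (ε * l)).smul_const
    (EuclideanSpace.single j (1 : ℝ)))
  have h2 := h.congr_of_eventuallyEq
    (f₁ := gradient (fun y => u y - ε * Real.exp (l * y j))) (by
      filter_upwards [hΩo.mem_nhds hx] with y hy
      exact grad_perturb j hΩo hu ε l y hy)
  refine h2.congr_fderiv ?_
  ext z k
  simp
  ring

/-- **Weak comparison with a classical solution (subsolution version)**:
an upper semicontinuous viscosity subsolution of `M(v) = N H` on a bounded
domain is dominated by any classical solution dominating it on the boundary. -/
theorem weak_comparison_subsolution_classical {N : ℕ} (hN : 2 ≤ N)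
    (Ω : Set (EuclideanSpace ℝ (Fin N))) (hΩo : IsOpen Ω) (hΩc : IsConnected Ω)
    (hΩb : Bornology.IsBounded Ω)
    (H : EuclideanSpace ℝ (Fin N) → ℝ) (hH : LocLipschitzOn Ω H)
    (u v : EuclideanSpace ℝ (Fin N) → ℝ)
    (hu_c2 : ContDiffOn ℝ 2 u Ω) (hu_cont : ContinuousOn u (closure Ω))
    (hu_sol : ∀ x ∈ Ω, mcOp u x = N * H x)
    (hv_usc : UpperSemicontinuousOn v (closure Ω)) (hv : IsViscositySubsol Ω H v)
    (hbdry : ∀ x ∈ frontier Ω, v x ≤ u x) :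
    ∀ x ∈ Ω, v x ≤ u x := by
  intro x0 hx0
  by_contra! hlt
  set m := v x0 - u x0 with hm
  have hmpos : 0 < m := by rw [hm]; linarith
  let j : Fin N := ⟨0, by omega⟩
  have hcpt : IsCompact (closure Ω) := hΩb.isCompact_closure
  have husc : UpperSemicontinuousOn (fun x => v x + -u x) (closure Ω) :=
    hv_usc.add hu_cont.neg.upperSemicontinuousOn
  set K := closure Ω ∩ {x | m / 2 ≤ v x + -u x} with hK
  have hKc : IsCompact K := by
    obtain ⟨V, hV, hVe⟩ := (upperSemicontinuousOn_iff_preimage_Ici.1 husc) (m / 2)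
    have : K = closure Ω ∩ V := hVe
    rw [this]
    exact hcpt.inter_right hV
  have hKΩ : K ⊆ Ω := by
    intro x hx
    by_contra hxn
    have : x ∈ frontier Ω := ⟨hx.1, by rwa [hΩo.interior_eq]⟩
    have h1 := hbdry x this
    have h2 : m / 2 ≤ v x + -u x := hx.2
    linarith
  have hg := grad_contDiffOn hΩo hu_c2
  obtain ⟨P, hP⟩ := hKc.exists_bound_of_continuousOn (hg.continuousOn.mono hKΩ)
  obtain ⟨P', hP'⟩ := hKc.exists_bound_of_continuousOn
    ((hg.continuousOn_fderiv_of_isOpen hΩo (by norm_num)).mono hKΩ)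
  obtain ⟨L, hL, hLip⟩ := mcG_lip (N := N) (P + 1)
  obtain ⟨θ, hθ, hell⟩ := mcG_ell j (P + 1)
  obtain ⟨l, hl1, hl⟩ : ∃ l : ℝ, 0 < l ∧ N * (L * P') < l * θ := by
    refine ⟨max 1 ((N * (L * P') + 1) / θ), by positivity, ?_⟩
    have := mul_le_mul_of_nonneg_right (le_max_right 1 ((N * (L * P') + 1) / θ)) hθ.le
    rw [div_mul_cancel₀ _ hθ.ne'] at this
    linarith
  have hec : Continuous fun x : EuclideanSpace ℝ (Fin N) => Real.exp (l * x j) := by fun_prop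
  obtain ⟨B, hB⟩ := hcpt.exists_bound_of_continuousOn hec.continuousOn
  have hB' : ∀ x ∈ closure Ω, Real.exp (l * x j) ≤ B := fun x hx =>
    (le_abs_self _).trans (hB x hx)
  have hB0 : 0 < B := (Real.exp_pos _).trans_le (hB' x0 (subset_closure hx0))
  obtain ⟨ε, hε, hε1, hε2⟩ : ∃ ε : ℝ, 0 < ε ∧ ε * B ≤ m / 2 ∧ ε * (l * B) ≤ 1 := by
    refine ⟨min (m / 2 / B) (1 / (l * B)), by positivity, ?_, ?_⟩
    · rw [← le_div_iff₀ hB0]; exact min_le_left _ _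
    · rw [← le_div_iff₀ (by positivity)]; exact min_le_right _ _
  have husc2 : UpperSemicontinuousOn (fun x => (v x + -u x) + ε * Real.exp (l * x j))
      (closure Ω) := husc.add (hec.const_mul ε |>.continuousOn.upperSemicontinuousOn)
  obtain ⟨y, hy, hmax⟩ := husc2.exists_isMaxOn ⟨x0, subset_closure hx0⟩ hcpt
  have hyK : y ∈ K := by
    refine ⟨hy, ?_⟩
    have h1 : (v x0 + -u x0) + ε * Real.exp (l * x0 j) ≤ (v y + -u y) + ε * Real.exp (l * y j) :=
      hmax (subset_closure hx0)
    have h2 := mul_le_mul_of_nonneg_left (hB' y hy) hε.le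
    have h3 : 0 < ε * Real.exp (l * x0 j) := by positivity
    show m / 2 ≤ v y + -u y
    linarith
  have hyΩ := hKΩ hyK
  set φ : EuclideanSpace ℝ (Fin N) → ℝ := fun x => u x - ε * Real.exp (l * x j) with hφ
  have hφc : ContDiffOn ℝ 2 φ Ω := by
    refine hu_c2.sub (ContDiff.contDiffOn ?_)
    have : ContDiff ℝ 2 fun x : EuclideanSpace ℝ (Fin N) => x j :=
      (EuclideanSpace.proj j : EuclideanSpace ℝ (Fin N) →L[ℝ] ℝ).contDiff
    exact contDiff_const.mul ((contDiff_const.mul this).exp)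
  have hvis := hv φ hφc y hyΩ (by
    have : IsMaxOn (fun x => v x - φ x) Ω y := by
      intro x hx
      have h1 : (v x + -u x) + ε * Real.exp (l * x j) ≤ (v y + -u y) + ε * Real.exp (l * y j) :=
        hmax (subset_closure hx)
      show v x - φ x ≤ v y - φ y
      simp only [hφ]
      linarith
    exact this.localize)
  rw [← hu_sol y hyΩ] at hvis
  set s := ε * l * Real.exp (l * y j) with hs
  have hspos : 0 < s := by positivity
  have hs1 : s ≤ 1 := by
    have := mul_le_mul_of_nonneg_left (hB' y hy) (by positivity : 0 ≤ ε * l)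
    linarith
  have e1 := mcOp_eq φ y _ _ (grad_perturb j hΩo hu_c2 ε l y hyΩ)
    (grad_perturb_deriv j hΩo hu_c2 ε l y hyΩ)
  have e2 := mcOp_eq u y _ _ rfl
    ((hg.differentiableOn (by norm_num) y hyΩ).differentiableAt (hΩo.mem_nhds hyΩ)).hasFDerivAt
  have hPy := hP y hyK
  have key := mc_strict j (P + 1) P' L θ s l hL (gradient u y) (fderiv ℝ (gradient u) y) hspos
    (by rw [mem_closedBall_zero_iff]; linarith)
    (by
      rw [mem_closedBall_zero_iff]
      refine (norm_sub_le _ _).trans ?_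
      have : ‖s • (EuclideanSpace.single j (1 : ℝ) : EuclideanSpace ℝ (Fin N))‖ = s := by
        simp [norm_smul, abs_of_pos hspos]
      rw [this]
      linarith)
    (hP' y hyK) hl1.le hl hLip hell
  rw [← e2, ← e1] at key
  linarith
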